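/- There exist constants C' > 0 and β < 0, depending only on A, φ, μ and the chosen Haar family, such that for all k, m ∈ ℕ and every a ∈ H₀ satisfying ‖D(a·h) − a·D(h)‖_{L²(μ)} ≤ ‖h‖_{L²(μ)} for all h ∈ H₀, one has ‖π_k(a) − π_{k+m}(a)‖_∞ ≤ C' Σ_{n=k}^{k+m−1} e^{nβ}, where ‖·‖_∞ denotes the supremum norm on Σ_A. -/

import Mathlib

open MeasureTheory Filter
open scoped ENNReal NNReal

namespace SFT

variable {l : ℕ}

/-- The one-sided subshift of finite type determined by the `l × l` matrix `A`:
infinite sequences with transitions allowed by `A`. -/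
abbrev SigmaA (l : ℕ) (A : Matrix (Fin l) (Fin l) ℕ) : Type :=
  {ω : ℕ → Fin l // ∀ k, A (ω k) (ω (k + 1)) = 1}

/-- The left shift `σ` on `SigmaA l A`. -/
def shift {A : Matrix (Fin l) (Fin l) ℕ} (ω : SigmaA l A) : SigmaA l A :=
  ⟨fun n => ω.1 (n + 1), fun k => ω.2 (k + 1)⟩

/-- Birkhoff sums `S_k φ = ∑_{m<k} φ ∘ σ^m`. -/
def birkhoff {A : Matrix (Fin l) (Fin l) ℕ} (φ : SigmaA l A → ℝ) (k : ℕ) (ω : SigmaA l A) : ℝ :=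
  ∑ m ∈ Finset.range k, φ (shift^[m] ω)

/-- The matrix `A` has `0`-`1` entries and is irreducible and aperiodic
(some power of `A` has all entries strictly positive). -/
def Primitive (A : Matrix (Fin l) (Fin l) ℕ) : Prop :=
  (∀ i j, A i j = 0 ∨ A i j = 1) ∧ ∃ n : ℕ, 0 < n ∧ ∀ i j, 0 < (A ^ n) i j

/-- A finite word is admissible, i.e. belongs to `Σ_A^*`. -/
def Admissible (A : Matrix (Fin l) (Fin l) ℕ) (x : List (Fin l)) : Prop :=
  x ≠ [] ∧ ∀ (i : ℕ) (h : i + 1 < x.length), A (x[i]'(by omega)) (x[i + 1]'h) = 1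

/-- The cylinder set `[x]` of a finite word (the empty word gives all of `Σ_A`). -/
def cylinder (A : Matrix (Fin l) (Fin l) ℕ) (x : List (Fin l)) : Set (SigmaA l A) :=
  {ω | ∀ (i : ℕ) (h : i < x.length), ω.1 i = x[i]'h}

/-- The initial word `(ω_1, …, ω_k)` of `ω`. -/
def wordPrefix {A : Matrix (Fin l) (Fin l) ℕ} (ω : SigmaA l A) (k : ℕ) : List (Fin l) :=
  List.ofFn (fun i : Fin k => ω.1 i)

/-- `μ` is a Gibbs measure for the potential `φ` with pressure `P`:
`c⁻¹ ≤ μ([ω_1,…,ω_k]) / exp(S_kφ(ω) − kP) ≤ c` for some `c > 1`. -/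
def IsGibbs {A : Matrix (Fin l) (Fin l) ℕ} (φ : SigmaA l A → ℝ) (P : ℝ)
    (μ : Measure (SigmaA l A)) : Prop :=
  ∃ c : ℝ, 1 < c ∧ ∀ (ω : SigmaA l A) (k : ℕ), 0 < k →
    c⁻¹ ≤ (μ (cylinder A (wordPrefix ω k))).toReal / Real.exp (birkhoff φ k ω - k * P) ∧
      (μ (cylinder A (wordPrefix ω k))).toReal / Real.exp (birkhoff φ k ω - k * P) ≤ c

/-- `φ` is Hölder continuous with respect to the metric `d(ω,υ) = 2^{-(ω ∧ υ)}`: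
there are `C` and an exponent `s > 0` with `|φ(ω) − φ(υ)| ≤ C ⬝ d(ω,υ)^s`, i.e.
`|φ(ω) − φ(υ)| ≤ C ⬝ 2^{-sn}` whenever `ω` and `υ` agree in their first `n` coordinates. -/
def HolderCont {A : Matrix (Fin l) (Fin l) ℕ} (φ : SigmaA l A → ℝ) : Prop :=
  ∃ C s : ℝ, 0 < s ∧ ∀ (ω υ : SigmaA l A) (n : ℕ),
    (∀ i < n, ω.1 i = υ.1 i) → |φ ω - φ υ| ≤ C * (2 : ℝ) ^ (-(s * n))

/-- `α(x)`: the number of children of the word `x` (the row sum of `A` at the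
last letter of `x`). -/
def alpha (A : Matrix (Fin l) (Fin l) ℕ) (x : List (Fin l)) : ℕ :=
  match x.getLast? with
  | some a => ∑ i, A a i
  | none => 0

/-- The `m`-th child `x θ_x⁻¹(m)` of the word `x`, the ordering of the children
being given by `θinv x`. -/
def child (θinv : List (Fin l) → ℕ → Fin l) (x : List (Fin l)) (m : ℕ) : List (Fin l) :=
  x ++ [θinv x m]

/-- The characteristic function of the cylinder `[x]`, as a function on `Σ_A`. -/
noncomputable def indC (A : Matrix (Fin l) (Fin l) ℕ) (x : List (Fin l)) : SigmaA l A → ℂ :=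
  (cylinder A x).indicator 1

/-- The `L²(μ)` inner product of two functions (conjugate linear in the first slot). -/
noncomputable def innerMu (A : Matrix (Fin l) (Fin l) ℕ) (μ : Measure (SigmaA l A))
    (f g : SigmaA l A → ℂ) : ℂ :=
  ∫ ω, (starRingEnd ℂ) (f ω) * g ω ∂μ

/-- The Haar function `e_{x,j} = ∑_m μ([xθ_x⁻¹(m)])^{-1/2} ⟨f_{x,m}, U_x f_{x,j}⟩_x χ_{[xθ_x⁻¹(m)]}`
as a function on `Σ_A`; here `u x m j = ⟨f_{x,m}, U_x f_{x,j}⟩_x` are the matrix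
coefficients of `U_x` in the orthonormal basis `(f_{x,m})_m`. -/
noncomputable def haarFun (A : Matrix (Fin l) (Fin l) ℕ) (μ : Measure (SigmaA l A))
    (θinv : List (Fin l) → ℕ → Fin l) (u : List (Fin l) → ℕ → ℕ → ℝ)
    (x : List (Fin l)) (j : ℕ) : SigmaA l A → ℂ := fun ω =>
  ∑ m ∈ Finset.range (alpha A x),
    ((((Real.sqrt ((μ (cylinder A (child θinv x m))).toReal))⁻¹ * u x m j : ℝ) : ℂ)) *
      indC A (child θinv x m) ω

/-- `H₀`: the complex linear span of the characteristic functions of cylinder sets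
of admissible words, together with `χ_{Σ_A}` (the cylinder of the empty word). -/
noncomputable def H0 (A : Matrix (Fin l) (Fin l) ℕ) : Submodule ℂ (SigmaA l A → ℂ) :=
  Submodule.span ℂ {f | ∃ x : List (Fin l), (x = [] ∨ Admissible A x) ∧ f = indC A x}

/-- The operator `D` (the Dirac operator on the dense domain `H₀`, extended to all
functions by the same formula; on `H₀` all but finitely many summands vanish). -/
noncomputable def Dop (A : Matrix (Fin l) (Fin l) ℕ) (μ : Measure (SigmaA l A))
    (θinv : List (Fin l) → ℕ → Fin l) (u : List (Fin l) → ℕ → ℕ → ℝ)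
    (h : SigmaA l A → ℂ) : SigmaA l A → ℂ := fun ω =>
  (∑ a : Fin l,
      (((μ (cylinder A [a])).toReal : ℂ))⁻¹ * innerMu A μ (indC A [a]) h * indC A [a] ω)
    - innerMu A μ (indC A []) h * indC A [] ω
    + ∑' y : List (Fin l),
        Set.indicator {y : List (Fin l) | Admissible A y}
          (fun y => ((((alpha A y : ℝ) - 1) / (μ (cylinder A y)).toReal : ℝ) : ℂ) *
            ∑ j ∈ Finset.range (alpha A y - 1),
              innerMu A μ (haarFun A μ θinv u y j) h * haarFun A μ θinv u y j ω) y

/-- The projections `π_k`:  `π_0(a) = (∫ a dμ) χ_{Σ_A}`,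
`π_{k+1}(a) = ∑_{x ∈ Σ} μ([x])⁻¹ (∫_{[x]} a dμ) χ_{[x]}
  + ∑_{m=1}^{k} ∑_{x ∈ Σ_A^m} ∑_{j=1}^{α(x)−1} (∫ a e_{x,j} dμ) e_{x,j}`. -/
noncomputable def piProj (A : Matrix (Fin l) (Fin l) ℕ) (μ : Measure (SigmaA l A))
    (θinv : List (Fin l) → ℕ → Fin l) (u : List (Fin l) → ℕ → ℕ → ℝ) :
    ℕ → (SigmaA l A → ℂ) → (SigmaA l A → ℂ)
  | 0 => fun a _ => ∫ ω, a ω ∂μ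
  | (k + 1) => fun a ω =>
      (∑ x : Fin l, (((μ (cylinder A [x])).toReal : ℂ))⁻¹ *
          (∫ ω' in cylinder A [x], a ω' ∂μ) * indC A [x] ω)
        + ∑ m ∈ Finset.range k, ∑ w : Fin (m + 1) → Fin l,
            Set.indicator {w : Fin (m + 1) → Fin l | Admissible A (List.ofFn w)}
              (fun w => ∑ j ∈ Finset.range (alpha A (List.ofFn w) - 1),
                (∫ ω', a ω' * haarFun A μ θinv u (List.ofFn w) j ω' ∂μ) *
                  haarFun A μ θinv u (List.ofFn w) j ω) w

/-- `g` only depends on the first `k` coordinates. -/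
def DependsOnFirst {A : Matrix (Fin l) (Fin l) ℕ} (k : ℕ) (g : SigmaA l A → ℂ) : Prop :=
  ∀ ω υ : SigmaA l A, (∀ i < k, ω.1 i = υ.1 i) → g ω = g υ

section DependsOnFirst

variable {A : Matrix (Fin l) (Fin l) ℕ} {k : ℕ} {f g : SigmaA l A → ℂ}

lemma DependsOnFirst.mono {k' : ℕ} (hg : DependsOnFirst k g) (hk : k ≤ k') :
    DependsOnFirst k' g :=
  fun ω υ h => hg ω υ fun i hi => h i (hi.trans_le hk)

lemma DependsOnFirst.mul (hf : DependsOnFirst k f) (hg : DependsOnFirst k g) :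
    DependsOnFirst k (fun ω => f ω * g ω) :=
  fun ω υ h => by simp only [hf ω υ h, hg ω υ h]

lemma DependsOnFirst.exists_factor (hg : DependsOnFirst k g) :
    ∃ G : (Fin k → Fin l) → ℂ, ∀ ω, g ω = G fun i => ω.1 i := by
  have hfac : g.FactorsThrough (fun (ω : SigmaA l A) (i : Fin k) => ω.1 i) := by
    intro ω υ h
    exact hg ω υ fun i hi => congrFun h ⟨i, hi⟩
  exact ⟨Function.extend _ g 0, fun ω => (hfac.extend_apply 0 ω).symm⟩

lemma DependsOnFirst.measurable (hg : DependsOnFirst k g) : Measurable g := by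
  obtain ⟨G, hG⟩ := hg.exists_factor
  have hrestrict : Measurable (fun (ω : SigmaA l A) (i : Fin k) => ω.1 i) := by
    exact measurable_pi_lambda _ fun i => (measurable_pi_apply _).comp measurable_subtype_coe
  rw [funext hG]
  exact (Measurable.of_discrete (f := G)).comp hrestrict

lemma DependsOnFirst.integrable (hg : DependsOnFirst k g) (μ : Measure (SigmaA l A))
    [IsFiniteMeasure μ] : Integrable g μ := by
  obtain ⟨G, hG⟩ := hg.exists_factor
  refine Integrable.of_bound hg.measurable.aestronglyMeasurable (∑ w, ‖G w‖)
    (ae_of_all _ fun ω => ?_)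
  rw [hG ω]
  exact Finset.single_le_sum (f := fun w => ‖G w‖) (fun _ _ => norm_nonneg _) (Finset.mem_univ _)

end DependsOnFirst

section Cylinder

variable {A : Matrix (Fin l) (Fin l) ℕ}

lemma measurableSet_cylinder (x : List (Fin l)) : MeasurableSet (cylinder A x) := by
  have hcyl : cylinder A x = ⋂ (i : ℕ) (h : i < x.length), {ω | ω.1 i = x[i]'h} := by
    ext ω
    simp [cylinder]
  rw [hcyl]
  refine MeasurableSet.iInter fun i => MeasurableSet.iInter fun h => ?_
  have heval : Measurable (fun ω : SigmaA l A => ω.1 i) :=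
    (measurable_pi_apply i).comp measurable_subtype_coe
  exact heval (measurableSet_singleton _)

lemma cylinder_nil : cylinder A [] = Set.univ := by
  ext ω
  simp [cylinder]

lemma mem_cylinder_singleton {a : Fin l} {ω : SigmaA l A} : ω ∈ cylinder A [a] ↔ ω.1 0 = a := by
  simp [cylinder]

lemma mem_cylinder_append_singleton {x : List (Fin l)} {a : Fin l} {ω : SigmaA l A} :
    ω ∈ cylinder A (x ++ [a]) ↔ ω ∈ cylinder A x ∧ ω.1 x.length = a := by
  simp only [cylinder, Set.mem_ofPred_eq, List.length_append, List.length_singleton]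
  constructor
  · intro h
    refine ⟨fun i hi => ?_, ?_⟩
    · rw [h i (by omega), List.getElem_append_left hi]
    · rw [h x.length (by omega)]
      simp
  · rintro ⟨h₁, h₂⟩ i hi
    rcases Nat.lt_succ_iff_lt_or_eq.mp hi with hlt | rfl
    · rw [h₁ i hlt, List.getElem_append_left hlt]
    · simp [h₂]

lemma cylinder_child_subset (θinv : List (Fin l) → ℕ → Fin l) (x : List (Fin l)) (m : ℕ) :
    cylinder A (child θinv x m) ⊆ cylinder A x :=
  fun _ h => (mem_cylinder_append_singleton.mp h).1

lemma indC_of_mem {x : List (Fin l)} {ω : SigmaA l A} (h : ω ∈ cylinder A x) :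
    indC A x ω = 1 := by
  simp [indC, h]

lemma indC_of_notMem {x : List (Fin l)} {ω : SigmaA l A} (h : ω ∉ cylinder A x) :
    indC A x ω = 0 := by
  simp [indC, h]

lemma conj_indC (x : List (Fin l)) (ω : SigmaA l A) :
    (starRingEnd ℂ) (indC A x ω) = indC A x ω := by
  by_cases h : ω ∈ cylinder A x
  · simp [indC_of_mem h]
  · simp [indC_of_notMem h]

lemma mem_cylinder_of_agree {x : List (Fin l)} {ω υ : SigmaA l A}
    (h : ∀ i < x.length, ω.1 i = υ.1 i) (hω : ω ∈ cylinder A x) : υ ∈ cylinder A x :=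
  fun i hi => (h i hi).symm.trans (hω i hi)

lemma dependsOnFirst_indC (x : List (Fin l)) : DependsOnFirst x.length (indC A x) := by
  intro ω υ h
  by_cases hω : ω ∈ cylinder A x
  · rw [indC_of_mem hω, indC_of_mem (mem_cylinder_of_agree h hω)]
  · rw [indC_of_notMem hω, indC_of_notMem fun hυ =>
      hω (mem_cylinder_of_agree (fun i hi => (h i hi).symm) hυ)]

lemma integral_indC (μ : Measure (SigmaA l A)) (x : List (Fin l)) :
    ∫ ω, indC A x ω ∂μ = ((μ (cylinder A x)).toReal : ℂ) := by
  have hconst := integral_indicator_const (μ := μ) (1 : ℂ) (measurableSet_cylinder x)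
  simpa [indC, Measure.real, Pi.one_def] using hconst

lemma exists_dependsOnFirst_of_mem_H0 {a : SigmaA l A → ℂ} (ha : a ∈ H0 A) :
    ∃ k, DependsOnFirst k a := by
  induction ha using Submodule.span_induction with
  | mem f hf =>
    obtain ⟨x, -, rfl⟩ := hf
    exact ⟨_, dependsOnFirst_indC x⟩
  | zero => exact ⟨0, fun _ _ _ => rfl⟩
  | add f g _ _ hf hg =>
    obtain ⟨k, hf⟩ := hf
    obtain ⟨k', hg⟩ := hg
    refine ⟨max k k', fun ω υ h => ?_⟩
    simp only [Pi.add_apply, hf.mono (le_max_left k k') ω υ h, hg.mono (le_max_right k k') ω υ h]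
  | smul c f _ hf =>
    obtain ⟨k, hf⟩ := hf
    exact ⟨k, fun ω υ h => by simp only [Pi.smul_apply, hf ω υ h]⟩

end Cylinder

section Prefix

variable {A : Matrix (Fin l) (Fin l) ℕ}

@[simp]
lemma length_wordPrefix (ω : SigmaA l A) (k : ℕ) : (wordPrefix ω k).length = k := by
  simp [wordPrefix]

lemma mem_cylinder_wordPrefix {ω υ : SigmaA l A} {k : ℕ} :
    υ ∈ cylinder A (wordPrefix ω k) ↔ ∀ i < k, υ.1 i = ω.1 i := by
  simp [cylinder, wordPrefix]

lemma wordPrefix_eq_of_mem_cylinder {x : List (Fin l)} {ω : SigmaA l A}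
    (h : ω ∈ cylinder A x) : wordPrefix ω x.length = x := by
  apply List.ext_getElem (by simp)
  intro i _ hi
  simpa [wordPrefix] using h i hi

lemma admissible_wordPrefix (ω : SigmaA l A) (n : ℕ) : Admissible A (wordPrefix ω (n + 1)) := by
  refine ⟨fun h => by simpa using congrArg List.length h, fun i hi => ?_⟩
  simp only [wordPrefix, List.getElem_ofFn]
  exact ω.2 i

lemma cylinder_wordPrefix_antitone (ω : SigmaA l A) :
    Antitone fun k => cylinder A (wordPrefix ω k) :=
  fun _ _ hk _ h => mem_cylinder_wordPrefix.mpr fun i hi =>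
    mem_cylinder_wordPrefix.mp h i (hi.trans_le hk)

/-- Prepend a letter to a sequence. -/
lemma exists_cons {i : Fin l} (υ : SigmaA l A) (h : A i (υ.1 0) = 1) :
    ∃ υ' : SigmaA l A, υ'.1 0 = i ∧ ∀ k, υ'.1 (k + 1) = υ.1 k := by
  refine ⟨⟨fun k => Nat.casesOn k i υ.1, fun k => ?_⟩, rfl, fun _ => rfl⟩
  cases k with
  | zero => exact h
  | succ k => exact υ.2 k

/-- Follow `ω` up to time `n` and `υ` afterwards. -/
lemma exists_splice (ω υ : SigmaA l A) (n : ℕ) (h : υ.1 0 = ω.1 n) :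
    ∃ ω' : SigmaA l A, (∀ i ≤ n, ω'.1 i = ω.1 i) ∧ ∀ k, ω'.1 (n + k) = υ.1 k := by
  refine ⟨⟨fun k => if k < n then ω.1 k else υ.1 (k - n), fun k => ?_⟩, fun i hi => ?_,
    fun k => by simp⟩
  · rcases lt_trichotomy (k + 1) n with hk | hk | hk
    · simpa [hk, (Nat.lt_succ_self k).trans hk] using ω.2 k
    · subst hk
      simpa [h] using ω.2 k
    · have hkn : k + 1 - n = k - n + 1 := by omega
      simpa [show ¬ k < n by omega, show ¬ k + 1 < n by omega, hkn] using υ.2 (k - n)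
  · rcases hi.lt_or_eq with hi | rfl
    · simp [hi]
    · simp [h]

lemma Primitive.exists_succ (hA : Primitive A) (i : Fin l) : ∃ j, A i j = 1 := by
  obtain ⟨h01, n, hn, hpos⟩ := hA
  obtain ⟨n, rfl⟩ := Nat.exists_eq_add_of_lt hn
  by_contra! hne
  have hzero : ∀ j, A i j = 0 := fun j => (h01 i j).resolve_right (hne j)
  have := hpos i i
  rw [zero_add, pow_succ', Matrix.mul_apply] at this
  simp [hzero] at this

lemma Primitive.exists_start (hA : Primitive A) (i : Fin l) : ∃ υ : SigmaA l A, υ.1 0 = i := by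
  choose f hf using hA.exists_succ
  refine ⟨⟨fun k => f^[k] i, fun k => ?_⟩, rfl⟩
  simp only [Function.iterate_succ_apply']
  exact hf _

lemma Primitive.exists_path (hA : Primitive A) (n : ℕ) (i j : Fin l) (h : 0 < (A ^ n) i j) :
    ∃ υ : SigmaA l A, υ.1 0 = i ∧ υ.1 n = j := by
  induction n generalizing i with
  | zero =>
    obtain rfl : i = j := by
      by_contra hij
      simp [Matrix.one_apply_ne hij] at h
    obtain ⟨υ, hυ⟩ := hA.exists_start i
    exact ⟨υ, hυ, hυ⟩
  | succ n ih =>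
    rw [pow_succ', Matrix.mul_apply] at h
    obtain ⟨b, -, hb⟩ := Finset.exists_ne_zero_of_sum_ne_zero h.ne'
    obtain ⟨hib, hbj⟩ := mul_ne_zero_iff.mp hb
    obtain ⟨υ, hυ0, hυn⟩ := ih b (Nat.pos_of_ne_zero hbj)
    obtain ⟨υ', h0, hs⟩ := exists_cons (i := i) υ (by
      rw [hυ0]
      exact (hA.1 i b).resolve_left hib)
    exact ⟨υ', h0, by rw [hs, hυn]⟩

end Prefix

section Haar

variable {A : Matrix (Fin l) (Fin l) ℕ} {μ : Measure (SigmaA l A)}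
  {θinv : List (Fin l) → ℕ → Fin l} {u : List (Fin l) → ℕ → ℕ → ℝ}

/-- The conditions on the enumeration `θinv` of the children and the coefficients `u` which make
`haarFun A μ θinv u` a Haar family. -/
structure IsHaarSystem (A : Matrix (Fin l) (Fin l) ℕ) (μ : Measure (SigmaA l A))
    (θinv : List (Fin l) → ℕ → Fin l) (u : List (Fin l) → ℕ → ℕ → ℝ) : Prop where
  bijOn : ∀ (x : List (Fin l)) (hx : Admissible A x),
    Set.BijOn (θinv x) (Set.Iio (alpha A x)) {y : Fin l | A (x.getLast hx.1) y = 1}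
  orth : ∀ x, Admissible A x → ∀ j < alpha A x, ∀ j' < alpha A x,
    ∑ m ∈ Finset.range (alpha A x), u x m j * u x m j' = if j = j' then 1 else 0
  last : ∀ x, Admissible A x → ∀ m < alpha A x,
    u x m (alpha A x - 1) =
      (Real.sqrt ((μ (cylinder A x)).toReal))⁻¹ *
        Real.sqrt ((μ (cylinder A (child θinv x m))).toReal)

lemma conj_haarFun (x : List (Fin l)) (j : ℕ) (ω : SigmaA l A) :
    (starRingEnd ℂ) (haarFun A μ θinv u x j ω) = haarFun A μ θinv u x j ω := by
  simp only [haarFun, map_sum, map_mul, Complex.conj_ofReal, conj_indC]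

lemma innerMu_haarFun (x : List (Fin l)) (j : ℕ) (h : SigmaA l A → ℂ) :
    innerMu A μ (haarFun A μ θinv u x j) h = ∫ ω, haarFun A μ θinv u x j ω * h ω ∂μ := by
  simp only [innerMu, conj_haarFun]

lemma haarFun_of_notMem {x : List (Fin l)} {ω : SigmaA l A} (h : ω ∉ cylinder A x) (j : ℕ) :
    haarFun A μ θinv u x j ω = 0 :=
  Finset.sum_eq_zero fun m _ => by
    rw [indC_of_notMem fun hm => h (cylinder_child_subset θinv x m hm), mul_zero]

lemma dependsOnFirst_indC_child (x : List (Fin l)) (m : ℕ) :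
    DependsOnFirst (x.length + 1) (indC A (child θinv x m)) := by
  simpa [child] using dependsOnFirst_indC (A := A) (child θinv x m)

lemma dependsOnFirst_haarFun (x : List (Fin l)) (j : ℕ) :
    DependsOnFirst (x.length + 1) (haarFun A μ θinv u x j) := by
  intro ω υ h
  simp only [haarFun, dependsOnFirst_indC_child x _ ω υ h]

lemma IsHaarSystem.indC_child_mul_indC_child (hH : IsHaarSystem A μ θinv u) {x : List (Fin l)}
    (hx : Admissible A x) {m m' : ℕ} (hm : m < alpha A x) (hm' : m' < alpha A x)
    (ω : SigmaA l A) :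
    indC A (child θinv x m) ω * indC A (child θinv x m') ω =
      if m = m' then indC A (child θinv x m) ω else 0 := by
  by_cases hω : ω ∈ cylinder A (child θinv x m)
  · by_cases hω' : ω ∈ cylinder A (child θinv x m')
    · have heq : m = m' := (hH.bijOn x hx).injOn hm hm' <|
        (mem_cylinder_append_singleton.mp hω).2.symm.trans (mem_cylinder_append_singleton.mp hω').2
      rw [indC_of_mem hω, indC_of_mem hω', if_pos heq, mul_one]
    · rw [indC_of_notMem hω', if_neg (by rintro rfl; exact hω' hω), mul_zero]
  · simp [indC_of_notMem hω]

variable [IsProbabilityMeasure μ]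

lemma toReal_cylinder_child_le (x : List (Fin l)) (m : ℕ) :
    (μ (cylinder A (child θinv x m))).toReal ≤ (μ (cylinder A x)).toReal :=
  ENNReal.toReal_mono (measure_ne_top _ _) (measure_mono (cylinder_child_subset θinv x m))

lemma IsHaarSystem.sqrt_child (hH : IsHaarSystem A μ θinv u) {x : List (Fin l)}
    (hx : Admissible A x) {m : ℕ} (hm : m < alpha A x) :
    Real.sqrt ((μ (cylinder A (child θinv x m))).toReal) =
      Real.sqrt ((μ (cylinder A x)).toReal) * u x m (alpha A x - 1) := by
  rw [hH.last x hx m hm]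
  rcases eq_or_ne (Real.sqrt ((μ (cylinder A x)).toReal)) 0 with h0 | h0
  · have := Real.sqrt_le_sqrt (toReal_cylinder_child_le (A := A) (μ := μ) (θinv := θinv) x m)
    rw [h0] at this ⊢
    simpa using this.antisymm (Real.sqrt_nonneg _)
  · rw [mul_inv_cancel_left₀ h0]

lemma IsHaarSystem.integral_haarFun (hH : IsHaarSystem A μ θinv u) {x : List (Fin l)}
    (hx : Admissible A x) {j : ℕ} (hj : j < alpha A x - 1) :
    ∫ ω, haarFun A μ θinv u x j ω ∂μ = 0 := by
  have hterm : ∀ m < alpha A x,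
      (Real.sqrt ((μ (cylinder A (child θinv x m))).toReal))⁻¹ * u x m j *
          (μ (cylinder A (child θinv x m))).toReal =
        Real.sqrt ((μ (cylinder A x)).toReal) * (u x m j * u x m (alpha A x - 1)) := by
    intro m hm
    set t := (μ (cylinder A (child θinv x m))).toReal with ht
    have ht0 : 0 ≤ t := ENNReal.toReal_nonneg
    have hsq : (Real.sqrt t)⁻¹ * t = Real.sqrt t := by
      rw [inv_mul_eq_div, Real.div_sqrt]
    calc _ = ((Real.sqrt t)⁻¹ * t) * u x m j := by ring
      _ = _ := by rw [hsq, ht, hH.sqrt_child hx hm]; ring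
  simp only [haarFun]
  rw [integral_finsetSum _ fun m _ =>
    ((dependsOnFirst_indC_child x m).integrable μ).const_mul _]
  simp only [integral_const_mul, integral_indC]
  have hreal : ∑ m ∈ Finset.range (alpha A x),
      (Real.sqrt ((μ (cylinder A (child θinv x m))).toReal))⁻¹ * u x m j *
          (μ (cylinder A (child θinv x m))).toReal = 0 := by
    rw [Finset.sum_congr rfl fun m hm => hterm m (Finset.mem_range.mp hm), ← Finset.mul_sum,
      hH.orth x hx j (by omega) _ (by omega), if_neg (by omega), mul_zero]
  exact_mod_cast hreal

lemma IsHaarSystem.integral_haarFun_mul (hH : IsHaarSystem A μ θinv u) {x : List (Fin l)}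
    (hx : Admissible A x) {j : ℕ} (hj : j < alpha A x - 1) {g : SigmaA l A → ℂ} {k : ℕ}
    (hg : DependsOnFirst k g) (hk : k ≤ x.length) :
    ∫ ω, haarFun A μ θinv u x j ω * g ω ∂μ = 0 := by
  obtain ⟨c, hc⟩ : ∃ c, ∀ ω ∈ cylinder A x, g ω = c := by
    by_cases hne : (cylinder A x).Nonempty
    · obtain ⟨υ, hυ⟩ := hne
      exact ⟨g υ, fun ω hω => hg ω υ fun i hi =>
        (hω i (hi.trans_le hk)).trans (hυ i (hi.trans_le hk)).symm⟩
    · exact ⟨0, fun ω hω => absurd ⟨ω, hω⟩ hne⟩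
  have hpt : ∀ ω, haarFun A μ θinv u x j ω * g ω = haarFun A μ θinv u x j ω * c := by
    intro ω
    by_cases hω : ω ∈ cylinder A x
    · rw [hc ω hω]
    · rw [haarFun_of_notMem hω, zero_mul, zero_mul]
  simp only [hpt, integral_mul_const, hH.integral_haarFun hx hj, zero_mul]

lemma IsHaarSystem.integral_haarFun_mul_haarFun_of_ne (hH : IsHaarSystem A μ θinv u)
    {x y : List (Fin l)} (hx : Admissible A x) (hy : Admissible A y) (hxy : x ≠ y)
    {i j : ℕ} (hi : i < alpha A x - 1) (hj : j < alpha A y - 1) :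
    ∫ ω, haarFun A μ θinv u x i ω * haarFun A μ θinv u y j ω ∂μ = 0 := by
  rcases lt_trichotomy x.length y.length with h | h | h
  · simp only [mul_comm (haarFun A μ θinv u x i _)]
    exact hH.integral_haarFun_mul hy hj (dependsOnFirst_haarFun x i) h
  · have hpt : ∀ ω, haarFun A μ θinv u x i ω * haarFun A μ θinv u y j ω = 0 := by
      intro ω
      by_cases hω : ω ∈ cylinder A x
      · have hω' : ω ∉ cylinder A y := fun hωy => hxy <| by
          rw [← wordPrefix_eq_of_mem_cylinder hω, ← wordPrefix_eq_of_mem_cylinder hωy, h]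
        rw [haarFun_of_notMem hω', mul_zero]
      · rw [haarFun_of_notMem hω, zero_mul]
    simp only [hpt, integral_zero]
  · exact hH.integral_haarFun_mul hx hi (dependsOnFirst_haarFun y j) h

lemma IsHaarSystem.integral_haarFun_mul_haarFun (hH : IsHaarSystem A μ θinv u)
    {x : List (Fin l)} (hx : Admissible A x)
    (hpos : ∀ m < alpha A x, 0 < (μ (cylinder A (child θinv x m))).toReal)
    {i j : ℕ} (hi : i < alpha A x) (hj : j < alpha A x) :
    ∫ ω, haarFun A μ θinv u x i ω * haarFun A μ θinv u x j ω ∂μ = if i = j then 1 else 0 := by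
  set s : ℕ → ℝ := fun m => Real.sqrt ((μ (cylinder A (child θinv x m))).toReal) with hs
  have hpt : ∀ ω, haarFun A μ θinv u x i ω * haarFun A μ θinv u x j ω =
      ∑ m ∈ Finset.range (alpha A x),
        ((((s m)⁻¹ * u x m i) * ((s m)⁻¹ * u x m j) : ℝ) : ℂ) * indC A (child θinv x m) ω := by
    intro ω
    simp only [haarFun, Finset.sum_mul_sum]
    refine Finset.sum_congr rfl fun m hm => ?_
    rw [Finset.sum_eq_single m]
    · rw [mul_mul_mul_comm, hH.indC_child_mul_indC_child hx (Finset.mem_range.mp hm)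
        (Finset.mem_range.mp hm), if_pos rfl]
      push_cast
      rfl
    · intro m' hm' hne
      rw [mul_mul_mul_comm, hH.indC_child_mul_indC_child hx (Finset.mem_range.mp hm)
        (Finset.mem_range.mp hm'), if_neg hne.symm, mul_zero]
    · exact fun h => absurd hm h
  simp only [hpt]
  rw [integral_finsetSum _ fun m _ =>
    ((dependsOnFirst_indC_child x m).integrable μ).const_mul _]
  simp only [integral_const_mul, integral_indC]
  have hreal : ∑ m ∈ Finset.range (alpha A x), ((s m)⁻¹ * u x m i) * ((s m)⁻¹ * u x m j) *
      (μ (cylinder A (child θinv x m))).toReal = if i = j then 1 else 0 := by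
    rw [← hH.orth x hx i hi j hj]
    refine Finset.sum_congr rfl fun m hm => ?_
    have hm0 := hpos m (Finset.mem_range.mp hm)
    have hsm : s m ≠ 0 := (Real.sqrt_pos.mpr hm0).ne'
    rw [← Real.sq_sqrt hm0.le]
    change (s m)⁻¹ * u x m i * ((s m)⁻¹ * u x m j) * s m ^ 2 = _
    field_simp
  split_ifs at hreal ⊢ <;> exact_mod_cast hreal

end Haar

section Dirac

variable {A : Matrix (Fin l) (Fin l) ℕ} {μ : Measure (SigmaA l A)}
  {θinv : List (Fin l) → ℕ → Fin l} {u : List (Fin l) → ℕ → ℕ → ℝ}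

/-- The contribution of the word `y` to `Dop`. -/
noncomputable def diracTerm (A : Matrix (Fin l) (Fin l) ℕ) (μ : Measure (SigmaA l A))
    (θinv : List (Fin l) → ℕ → Fin l) (u : List (Fin l) → ℕ → ℕ → ℝ)
    (h : SigmaA l A → ℂ) (y : List (Fin l)) : SigmaA l A → ℂ := fun ω =>
  Set.indicator {y : List (Fin l) | Admissible A y}
    (fun y => ((((alpha A y : ℝ) - 1) / (μ (cylinder A y)).toReal : ℝ) : ℂ) *
      ∑ j ∈ Finset.range (alpha A y - 1),
        innerMu A μ (haarFun A μ θinv u y j) h * haarFun A μ θinv u y j ω) y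

lemma diracTerm_of_admissible (h : SigmaA l A → ℂ) {y : List (Fin l)} (hy : Admissible A y)
    (ω : SigmaA l A) :
    diracTerm A μ θinv u h y ω =
      ((((alpha A y : ℝ) - 1) / (μ (cylinder A y)).toReal : ℝ) : ℂ) *
        ∑ j ∈ Finset.range (alpha A y - 1),
          innerMu A μ (haarFun A μ θinv u y j) h * haarFun A μ θinv u y j ω :=
  Set.indicator_of_mem (s := {y : List (Fin l) | Admissible A y}) hy _

lemma diracTerm_of_not_admissible (h : SigmaA l A → ℂ) {y : List (Fin l)}
    (hy : ¬ Admissible A y) (ω : SigmaA l A) : diracTerm A μ θinv u h y ω = 0 :=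
  Set.indicator_of_notMem (s := {y : List (Fin l) | Admissible A y}) hy _

lemma dependsOnFirst_diracTerm (h : SigmaA l A → ℂ) (y : List (Fin l)) :
    DependsOnFirst (y.length + 1) (diracTerm A μ θinv u h y) := by
  intro ω υ hωυ
  by_cases hy : Admissible A y
  · simp only [diracTerm_of_admissible h hy, dependsOnFirst_haarFun y _ ω υ hωυ]
  · simp only [diracTerm_of_not_admissible h hy]

variable [IsProbabilityMeasure μ]

lemma IsHaarSystem.diracTerm_eq_zero (hH : IsHaarSystem A μ θinv u) {a : SigmaA l A → ℂ} {k : ℕ}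
    (ha : DependsOnFirst k a) {y : List (Fin l)} (hk : k ≤ y.length) (ω : SigmaA l A) :
    diracTerm A μ θinv u a y ω = 0 := by
  by_cases hy : Admissible A y
  · rw [diracTerm_of_admissible a hy, Finset.sum_eq_zero, mul_zero]
    intro j hj
    rw [innerMu_haarFun, hH.integral_haarFun_mul hy (Finset.mem_range.mp hj) ha hk, zero_mul]
  · exact diracTerm_of_not_admissible a hy ω

/-- On functions depending on finitely many coordinates, `Dop` is given by a finite sum. -/
lemma IsHaarSystem.dop_eq_sum (hH : IsHaarSystem A μ θinv u) {a : SigmaA l A → ℂ} {k : ℕ}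
    (ha : DependsOnFirst k a) (ω : SigmaA l A) :
    Dop A μ θinv u a ω =
      (∑ b : Fin l,
        (((μ (cylinder A [b])).toReal : ℂ))⁻¹ * innerMu A μ (indC A [b]) a * indC A [b] ω)
      - innerMu A μ (indC A []) a * indC A [] ω
      + ∑ y ∈ (List.finite_length_lt (Fin l) k).toFinset, diracTerm A μ θinv u a y ω := by
  unfold Dop
  congr 1
  refine tsum_eq_sum fun y hy => hH.diracTerm_eq_zero ha ?_ ω
  simpa using hy

lemma IsHaarSystem.dependsOnFirst_dop (hH : IsHaarSystem A μ θinv u) {a : SigmaA l A → ℂ}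
    {k : ℕ} (ha : DependsOnFirst k a) : DependsOnFirst (k + 1) (Dop A μ θinv u a) := by
  intro ω υ h
  have hb : ∀ b, indC A [b] ω = indC A [b] υ := fun b =>
    (dependsOnFirst_indC [b]).mono (k' := k + 1) (by simp) ω υ h
  have hnil : indC A [] ω = indC A [] υ :=
    (dependsOnFirst_indC []).mono (k' := k + 1) (by simp) ω υ h
  rw [hH.dop_eq_sum ha, hH.dop_eq_sum ha, hnil]
  simp only [hb]
  congr 1
  refine Finset.sum_congr rfl fun y hy => ?_
  have hlen : y.length < k := by simpa using hy
  exact (dependsOnFirst_diracTerm a y).mono (by omega) ω υ h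

lemma IsHaarSystem.integral_haarFun_mul_diracTerm (hH : IsHaarSystem A μ θinv u)
    {x : List (Fin l)} (hx : Admissible A x)
    (hpos : ∀ m < alpha A x, 0 < (μ (cylinder A (child θinv x m))).toReal)
    {i : ℕ} (hi : i < alpha A x - 1) (a : SigmaA l A → ℂ) (y : List (Fin l)) :
    ∫ ω, haarFun A μ θinv u x i ω * diracTerm A μ θinv u a y ω ∂μ =
      if y = x then ((((alpha A x : ℝ) - 1) / (μ (cylinder A x)).toReal : ℝ) : ℂ) *
        ∫ ω, haarFun A μ θinv u x i ω * a ω ∂μ else 0 := by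
  by_cases hy : Admissible A y
  · have hpt : ∀ ω, haarFun A μ θinv u x i ω * diracTerm A μ θinv u a y ω =
        ((((alpha A y : ℝ) - 1) / (μ (cylinder A y)).toReal : ℝ) : ℂ) *
          ∑ j ∈ Finset.range (alpha A y - 1), innerMu A μ (haarFun A μ θinv u y j) a *
            (haarFun A μ θinv u x i ω * haarFun A μ θinv u y j ω) := by
      intro ω
      rw [diracTerm_of_admissible a hy, mul_left_comm, Finset.mul_sum]
      congr 1
      exact Finset.sum_congr rfl fun j _ => by ring
    simp only [hpt]
    rw [integral_const_mul, integral_finsetSum _ fun j _ => ?_]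
    · simp only [integral_const_mul]
      split_ifs with hyx
      · subst hyx
        congr 1
        rw [Finset.sum_eq_single i]
        · rw [hH.integral_haarFun_mul_haarFun hy hpos (by omega) (by omega), if_pos rfl, mul_one,
            innerMu_haarFun]
        · intro j hj hne
          have hj := Finset.mem_range.mp hj
          rw [hH.integral_haarFun_mul_haarFun hy hpos (by omega) (by omega), if_neg hne.symm,
            mul_zero]
        · exact fun h => absurd (Finset.mem_range.mpr hi) h
      · rw [Finset.sum_eq_zero, mul_zero]
        intro j hj
        rw [hH.integral_haarFun_mul_haarFun_of_ne hx hy (Ne.symm hyx) hi (Finset.mem_range.mp hj),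
          mul_zero]
    · exact ((((dependsOnFirst_haarFun x i).mono (le_max_left _ (y.length + 1))).mul
        ((dependsOnFirst_haarFun y j).mono (le_max_right _ _))).integrable μ).const_mul _
  · have hyx : y ≠ x := by
      rintro rfl
      exact hy hx
    simp [diracTerm_of_not_admissible a hy, hyx]

/-- The Haar functions are eigenfunctions of the symmetric operator `Dop`. -/
lemma IsHaarSystem.integral_haarFun_mul_dop (hH : IsHaarSystem A μ θinv u)
    {x : List (Fin l)} (hx : Admissible A x)
    (hpos : ∀ m < alpha A x, 0 < (μ (cylinder A (child θinv x m))).toReal)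
    {i : ℕ} (hi : i < alpha A x - 1) {a : SigmaA l A → ℂ} {k : ℕ} (ha : DependsOnFirst k a) :
    ∫ ω, haarFun A μ θinv u x i ω * Dop A μ θinv u a ω ∂μ =
      ((((alpha A x : ℝ) - 1) / (μ (cylinder A x)).toReal : ℝ) : ℂ) *
        ∫ ω, haarFun A μ θinv u x i ω * a ω ∂μ := by
  have hlen : 1 ≤ x.length := List.length_pos_iff.mpr hx.1
  set K := max k (x.length + 1)
  have haK : DependsOnFirst K a := ha.mono (le_max_left _ _)
  have hint : ∀ {g : SigmaA l A → ℂ} {k : ℕ}, DependsOnFirst k g →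
      Integrable (fun ω => haarFun A μ θinv u x i ω * g ω) μ := fun {g k} hg =>
    (((dependsOnFirst_haarFun x i).mono (le_max_left _ k)).mul
      (hg.mono (le_max_right _ _))).integrable μ
  have hb : ∀ b, ∫ ω, haarFun A μ θinv u x i ω * indC A [b] ω ∂μ = 0 := fun b =>
    hH.integral_haarFun_mul hx hi (dependsOnFirst_indC [b]) (by simpa using hlen)
  have hnil : ∫ ω, haarFun A μ θinv u x i ω * indC A [] ω ∂μ = 0 :=
    hH.integral_haarFun_mul hx hi (dependsOnFirst_indC []) (by simp)
  simp only [hH.dop_eq_sum haK, mul_add, mul_sub, Finset.mul_sum,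
    mul_left_comm (haarFun A μ θinv u x i _)]
  have hint_b : Integrable (fun ω => ∑ b : Fin l,
      (((μ (cylinder A [b])).toReal : ℂ))⁻¹ * innerMu A μ (indC A [b]) a *
        (haarFun A μ θinv u x i ω * indC A [b] ω)) μ :=
    integrable_finsetSum _ fun b _ => (hint (dependsOnFirst_indC [b])).const_mul _
  have hint_nil : Integrable (fun ω => innerMu A μ (indC A []) a *
      (haarFun A μ θinv u x i ω * indC A [] ω)) μ :=
    (hint (dependsOnFirst_indC [])).const_mul _
  have hint_sub : Integrable (fun ω => ∑ b : Fin l,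
      (((μ (cylinder A [b])).toReal : ℂ))⁻¹ * innerMu A μ (indC A [b]) a *
        (haarFun A μ θinv u x i ω * indC A [b] ω) - innerMu A μ (indC A []) a *
      (haarFun A μ θinv u x i ω * indC A [] ω)) μ := hint_b.sub hint_nil
  rw [integral_add hint_sub
      (integrable_finsetSum _ fun y _ => hint (dependsOnFirst_diracTerm a y)),
    integral_sub hint_b hint_nil,
    integral_finsetSum _ fun b _ => (hint (dependsOnFirst_indC [b])).const_mul _,
    integral_finsetSum _ fun y _ => hint (dependsOnFirst_diracTerm a y)]
  simp only [integral_const_mul, hb, hnil, hH.integral_haarFun_mul_diracTerm hx hpos hi a]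
  simp [K]

/-- `Dop` annihilates the constant functions. -/
lemma IsHaarSystem.dop_indC_nil (hH : IsHaarSystem A μ θinv u) {ω : SigmaA l A}
    (hω : (μ (cylinder A [ω.1 0])).toReal ≠ 0) : Dop A μ θinv u (indC A []) ω = 0 := by
  have hone : ∀ υ : SigmaA l A, indC A [] υ = 1 := fun υ => indC_of_mem (by simp [cylinder_nil])
  rw [hH.dop_eq_sum (k := 0) (dependsOnFirst_indC [])]
  simp only [innerMu, conj_indC, hone, mul_one, integral_indC]
  rw [Finset.sum_eq_single (ω.1 0)]
  · rw [indC_of_mem (mem_cylinder_singleton.mpr rfl)]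
    have : ((μ (cylinder A [ω.1 0])).toReal : ℂ) ≠ 0 := by exact_mod_cast hω
    simp [this]
  · intro b _ hb
    rw [indC_of_notMem fun h => hb (mem_cylinder_singleton.mp h).symm, mul_zero]
  · simp

end Dirac

section Gibbs

variable {A : Matrix (Fin l) (Fin l) ℕ} {φ : SigmaA l A → ℝ} {P : ℝ} {μ : Measure (SigmaA l A)}

lemma IsGibbs.toReal_pos (hG : IsGibbs φ P μ) (ω : SigmaA l A) {n : ℕ} (hn : 0 < n) :
    0 < (μ (cylinder A (wordPrefix ω n))).toReal := by
  obtain ⟨c, hc, h⟩ := hG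
  have hquot := (inv_pos.mpr (zero_lt_one.trans hc)).trans_le (h ω n hn).1
  exact (div_pos_iff_of_pos_right (Real.exp_pos _)).mp hquot

lemma pow_mul_toReal_cylinder_le {δ : ℝ} (hδ : 0 < δ)
    (h : ∀ (ω : SigmaA l A) (n : ℕ), 0 < n → δ * (μ (cylinder A (wordPrefix ω n))).toReal ≤
      (μ (cylinder A (wordPrefix ω (n + 1)))).toReal)
    (ω : SigmaA l A) {n : ℕ} (hn : 0 < n) (k : ℕ) :
    δ ^ k * (μ (cylinder A (wordPrefix ω n))).toReal ≤
      (μ (cylinder A (wordPrefix ω (n + k)))).toReal := by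
  induction k with
  | zero => simp
  | succ k ih =>
    calc δ ^ (k + 1) * (μ (cylinder A (wordPrefix ω n))).toReal
        = δ * (δ ^ k * (μ (cylinder A (wordPrefix ω n))).toReal) := by ring
      _ ≤ δ * (μ (cylinder A (wordPrefix ω (n + k)))).toReal := by gcongr
      _ ≤ _ := h ω (n + k) (by omega)

variable [IsProbabilityMeasure μ]

/-- The measure of a cylinder is comparable with the measure of its parent. -/
lemma IsGibbs.exists_le_succ (hG : IsGibbs φ P μ) (hφ : HolderCont φ) :
    ∃ δ : ℝ, 0 < δ ∧ ∀ (ω : SigmaA l A) (n : ℕ), 0 < n →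
      δ * (μ (cylinder A (wordPrefix ω n))).toReal ≤
        (μ (cylinder A (wordPrefix ω (n + 1)))).toReal := by
  obtain ⟨c, hc, h⟩ := hG
  obtain ⟨C, s, -, hC⟩ := hφ
  obtain ⟨ω₀⟩ := nonempty_of_isProbabilityMeasure μ
  have hc0 : 0 < c := zero_lt_one.trans hc
  have hlow : ∀ ω, φ ω₀ - C ≤ φ ω := by
    intro ω
    have := hC ω₀ ω 0 (by simp)
    simp only [CharP.cast_eq_zero, mul_zero, neg_zero, Real.rpow_zero, mul_one] at this
    linarith [le_abs_self (φ ω₀ - φ ω)]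
  refine ⟨c⁻¹ * c⁻¹ * Real.exp (φ ω₀ - C - P), by positivity, fun ω n hn => ?_⟩
  have hup := (div_le_iff₀ (Real.exp_pos _)).mp (h ω n hn).2
  have hdown := (le_div_iff₀ (Real.exp_pos _)).mp (h ω (n + 1) n.succ_pos).1
  have hexp : Real.exp (birkhoff φ (n + 1) ω - (n + 1 : ℕ) * P) =
      Real.exp (φ (shift^[n] ω) - P) * Real.exp (birkhoff φ n ω - n * P) := by
    rw [← Real.exp_add, birkhoff, Finset.sum_range_succ, ← birkhoff]
    congr 1
    push_cast
    ring
  rw [hexp] at hdown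
  calc c⁻¹ * c⁻¹ * Real.exp (φ ω₀ - C - P) * (μ (cylinder A (wordPrefix ω n))).toReal
      ≤ c⁻¹ * c⁻¹ * Real.exp (φ (shift^[n] ω) - P) *
          (c * Real.exp (birkhoff φ n ω - n * P)) := by
        gcongr
        exact hlow _
    _ = c⁻¹ * (Real.exp (φ (shift^[n] ω) - P) * Real.exp (birkhoff φ n ω - n * P)) := by
        field_simp
    _ ≤ _ := hdown

/-- The measure of cylinders contracts by a fixed factor after a fixed number of steps, since
every cylinder splits into at least two pieces of comparable measure. -/
lemma exists_contraction (hl : 2 ≤ l) (hA : Primitive A) {δ : ℝ} (hδ : 0 < δ)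
    (h : ∀ (ω : SigmaA l A) (n : ℕ), 0 < n → δ * (μ (cylinder A (wordPrefix ω n))).toReal ≤
      (μ (cylinder A (wordPrefix ω (n + 1)))).toReal) :
    ∃ N : ℕ, 0 < N ∧ ∃ ε : ℝ, 0 < ε ∧ ∀ (ω : SigmaA l A) (n : ℕ), 0 < n →
      (μ (cylinder A (wordPrefix ω (n + N)))).toReal ≤
        (1 - ε) * (μ (cylinder A (wordPrefix ω n))).toReal := by
  obtain ⟨N, hN, hpos⟩ := hA.2
  refine ⟨N, hN, δ ^ N, by positivity, fun ω n hn => ?_⟩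
  obtain ⟨p, rfl⟩ := Nat.exists_eq_add_of_lt hn
  rw [zero_add]
  have : Nontrivial (Fin l) := Fin.nontrivial_iff_two_le.mpr hl
  obtain ⟨b, hb⟩ := exists_ne (ω.1 (p + N))
  obtain ⟨υ, hυ0, hυN⟩ := hA.exists_path N (ω.1 p) b (hpos _ _)
  obtain ⟨ω', hω', hω'N⟩ := exists_splice ω υ p hυ0
  have hdisj : Disjoint (cylinder A (wordPrefix ω (p + 1 + N)))
      (cylinder A (wordPrefix ω' (p + 1 + N))) := by
    refine Set.disjoint_left.mpr fun η hη hη' => hb ?_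
    rw [← hυN, ← hω'N, ← mem_cylinder_wordPrefix.mp hη (p + N) (by omega),
      ← mem_cylinder_wordPrefix.mp hη' (p + N) (by omega)]
  have hpre : cylinder A (wordPrefix ω' (p + 1)) = cylinder A (wordPrefix ω (p + 1)) := by
    ext η
    simp only [mem_cylinder_wordPrefix]
    exact forall₂_congr fun i hi => by rw [hω' i (by omega)]
  have hsub : cylinder A (wordPrefix ω (p + 1 + N)) ∪ cylinder A (wordPrefix ω' (p + 1 + N)) ⊆
      cylinder A (wordPrefix ω (p + 1)) := by
    refine Set.union_subset (cylinder_wordPrefix_antitone ω (by omega)) ?_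
    rw [← hpre]
    exact cylinder_wordPrefix_antitone ω' (by omega)
  have hsum := ENNReal.toReal_mono (measure_ne_top μ _) (measure_mono (μ := μ) hsub)
  rw [measure_union hdisj (measurableSet_cylinder _),
    ENNReal.toReal_add (measure_ne_top _ _) (measure_ne_top _ _)] at hsum
  have hlow := pow_mul_toReal_cylinder_le hδ h ω' p.succ_pos N
  rw [Nat.succ_eq_add_one, hpre] at hlow
  linarith

/-- The measure of cylinders decays exponentially in the length of the word. -/
lemma exists_exponential_decay (hl : 2 ≤ l) (hA : Primitive A) {δ : ℝ} (hδ : 0 < δ)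
    (h : ∀ (ω : SigmaA l A) (n : ℕ), 0 < n → δ * (μ (cylinder A (wordPrefix ω n))).toReal ≤
      (μ (cylinder A (wordPrefix ω (n + 1)))).toReal) :
    ∃ C β : ℝ, 0 < C ∧ β < 0 ∧ ∀ (ω : SigmaA l A) (n : ℕ), 0 < n →
      (μ (cylinder A (wordPrefix ω n))).toReal ≤ C * Real.exp (n * β) := by
  obtain ⟨N, hN, ε, hε, hcontr⟩ := exists_contraction hl hA hδ h
  have hN' : (0 : ℝ) < N := by exact_mod_cast hN
  have hN0 := hN'.ne'
  set β := -ε / N with hβ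
  have hβ0 : β < 0 := div_neg_of_neg_of_pos (neg_neg_of_pos hε) hN'
  refine ⟨Real.exp (-(N * β)), β, Real.exp_pos _, hβ0, fun ω n hn => ?_⟩
  induction n using Nat.strong_induction_on with
  | _ n ih =>
    rw [← Real.exp_add]
    rcases le_or_gt n N with hnN | hnN
    · have hle : (n : ℝ) ≤ N := by exact_mod_cast hnN
      calc (μ (cylinder A (wordPrefix ω n))).toReal ≤ 1 := by
            simpa [Measure.real] using measureReal_le_one (μ := μ) (s := cylinder A (wordPrefix ω n))
        _ ≤ _ := Real.one_le_exp (by nlinarith)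
    · obtain ⟨q, rfl⟩ := Nat.exists_eq_add_of_lt hnN
      have hq := hcontr ω (q + 1) q.succ_pos
      have hih := ih (q + 1) (by omega) q.succ_pos
      rw [show N + q + 1 = q + 1 + N by omega]
      calc (μ (cylinder A (wordPrefix ω (q + 1 + N)))).toReal
          ≤ (1 - ε) * (μ (cylinder A (wordPrefix ω (q + 1)))).toReal := hq
        _ ≤ Real.exp (-ε) * (Real.exp (-(N * β)) * Real.exp ((q + 1 : ℕ) * β)) := by
            gcongr
            linarith [Real.add_one_le_exp (-ε)]
        _ = _ := by
            rw [← Real.exp_add, ← Real.exp_add]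
            congr 1
            have : -ε = N * β := by rw [hβ]; field_simp
            rw [this]
            push_cast
            ring

end Gibbs

section Bounds

variable {A : Matrix (Fin l) (Fin l) ℕ} {μ : Measure (SigmaA l A)}
  {θinv : List (Fin l) → ℕ → Fin l} {u : List (Fin l) → ℕ → ℕ → ℝ}

lemma Primitive.alpha_le (hA : Primitive A) (x : List (Fin l)) : alpha A x ≤ l := by
  unfold alpha
  split
  · rename_i b _
    calc ∑ i, A b i ≤ ∑ _i : Fin l, 1 := Finset.sum_le_sum fun i _ => by
          rcases hA.1 b i with h | h <;> omega
      _ = l := by simp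
  · exact Nat.zero_le _

/-- Children of initial words of points of the subshift are again such initial words. -/
lemma IsHaarSystem.exists_child_eq (hH : IsHaarSystem A μ θinv u) (hA : Primitive A)
    (ω : SigmaA l A) (n : ℕ) {m : ℕ} (hm : m < alpha A (wordPrefix ω (n + 1))) :
    ∃ ω' : SigmaA l A, wordPrefix ω' (n + 1) = wordPrefix ω (n + 1) ∧
      child θinv (wordPrefix ω (n + 1)) m = wordPrefix ω' (n + 1 + 1) := by
  have hadm := admissible_wordPrefix ω n
  have hstep : A ((wordPrefix ω (n + 1)).getLast hadm.1) (θinv (wordPrefix ω (n + 1)) m) = 1 :=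
    (hH.bijOn _ hadm).mapsTo hm
  have hlast : (wordPrefix ω (n + 1)).getLast hadm.1 = ω.1 n := by
    simp [List.getLast_eq_getElem, wordPrefix, List.getElem_ofFn, -List.ofFn_succ]
  rw [hlast] at hstep
  obtain ⟨υ, hυ⟩ := hA.exists_start (θinv (wordPrefix ω (n + 1)) m)
  obtain ⟨υ', hυ'0, hυ'⟩ := exists_cons (i := ω.1 n) υ (by rw [hυ]; exact hstep)
  obtain ⟨ω', hω', hω'n⟩ := exists_splice ω υ' n hυ'0
  have hmem : ω' ∈ cylinder A (wordPrefix ω (n + 1)) :=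
    mem_cylinder_wordPrefix.mpr fun i hi => hω' i (by omega)
  refine ⟨ω', by simpa using wordPrefix_eq_of_mem_cylinder hmem, ?_⟩
  have hmem' : ω' ∈ cylinder A (child θinv (wordPrefix ω (n + 1)) m) :=
    mem_cylinder_append_singleton.mpr ⟨hmem, by rw [length_wordPrefix, hω'n, hυ', hυ]⟩
  have := wordPrefix_eq_of_mem_cylinder hmem'
  rw [child, List.length_append, length_wordPrefix] at this
  exact this.symm

lemma IsHaarSystem.abs_u_le_one (hH : IsHaarSystem A μ θinv u) {x : List (Fin l)}
    (hx : Admissible A x) {m j : ℕ} (hm : m < alpha A x) (hj : j < alpha A x) :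
    |u x m j| ≤ 1 := by
  have hsum := hH.orth x hx j hj j hj
  rw [if_pos rfl] at hsum
  have hle := Finset.single_le_sum (f := fun m => u x m j * u x m j)
    (fun m _ => mul_self_nonneg _) (Finset.mem_range.mpr hm)
  rw [hsum] at hle
  exact (sq_le_one_iff_abs_le_one _).mp (by simpa [sq] using hle)

lemma IsHaarSystem.norm_haarFun_le (hH : IsHaarSystem A μ θinv u) (hA : Primitive A)
    {x : List (Fin l)} (hx : Admissible A x) {t : ℝ} (ht : 0 < t)
    (hchild : ∀ m < alpha A x, t ≤ (μ (cylinder A (child θinv x m))).toReal)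
    {j : ℕ} (hj : j < alpha A x) (ω : SigmaA l A) :
    ‖haarFun A μ θinv u x j ω‖ ≤ l * (Real.sqrt t)⁻¹ := by
  have hst := Real.sqrt_pos.mpr ht
  calc ‖haarFun A μ θinv u x j ω‖
      ≤ ∑ _m ∈ Finset.range (alpha A x), (Real.sqrt t)⁻¹ := by
        refine norm_sum_le_of_le _ fun m hm => ?_
        have hm := Finset.mem_range.mp hm
        rw [norm_mul, Complex.norm_real, norm_mul, Real.norm_eq_abs, Real.norm_eq_abs, abs_inv,
          abs_of_nonneg (Real.sqrt_nonneg _)]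
        have hind : ‖indC A (child θinv x m) ω‖ ≤ 1 := by
          by_cases h : ω ∈ cylinder A (child θinv x m)
          · simp [indC_of_mem h]
          · simp [indC_of_notMem h]
        calc _ ≤ (Real.sqrt t)⁻¹ * 1 * 1 := by
              gcongr
              · exact hchild m hm
              · exact hH.abs_u_le_one hx hm hj
          _ = _ := by ring
    _ = alpha A x * (Real.sqrt t)⁻¹ := by simp
    _ ≤ l * (Real.sqrt t)⁻¹ := by
        gcongr
        exact hA.alpha_le x

lemma eLpNorm_two_le_of_bound_on_cylinder [IsProbabilityMeasure μ] {f : SigmaA l A → ℂ}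
    {x : List (Fin l)} {B : ℝ} (hB : 0 ≤ B) (hf : ∀ ω, ‖f ω‖ ≤ B)
    (hsupp : ∀ ω ∉ cylinder A x, f ω = 0) :
    eLpNorm f 2 μ ≤ ENNReal.ofReal (B * Real.sqrt ((μ (cylinder A x)).toReal)) := by
  calc eLpNorm f 2 μ ≤ eLpNorm ((cylinder A x).indicator fun _ => B) 2 μ := by
        refine eLpNorm_mono fun ω => ?_
        by_cases hω : ω ∈ cylinder A x
        · rw [Set.indicator_of_mem hω, Real.norm_of_nonneg hB]
          exact hf ω
        · simp [hsupp ω hω]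
    _ = ENNReal.ofReal (B * Real.sqrt ((μ (cylinder A x)).toReal)) := by
        rw [eLpNorm_indicator_const (measurableSet_cylinder x) (by simp) (by simp),
          ENNReal.ofReal_mul hB, Real.enorm_of_nonneg hB, Real.sqrt_eq_rpow,
          ← ENNReal.ofReal_rpow_of_nonneg ENNReal.toReal_nonneg (by norm_num),
          ENNReal.ofReal_toReal (measure_ne_top _ _), ENNReal.toReal_ofNat]

lemma enorm_integral_mul_le {f g : SigmaA l A → ℂ} (hf : AEStronglyMeasurable f μ)
    (hg : AEStronglyMeasurable g μ) :
    ‖∫ ω, f ω * g ω ∂μ‖ₑ ≤ eLpNorm f 2 μ * eLpNorm g 2 μ := by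
  calc ‖∫ ω, f ω * g ω ∂μ‖ₑ ≤ ∫⁻ ω, ‖f ω * g ω‖ₑ ∂μ := enorm_integral_le_lintegral_enorm _
    _ = eLpNorm (f • g) 1 μ := by rw [eLpNorm_one_eq_lintegral_enorm]; rfl
    _ ≤ _ := eLpNorm_smul_le_mul_eLpNorm hg hf

/-- A commutator bound controls `Dop a` itself, because `Dop` annihilates constants. -/
lemma IsHaarSystem.eLpNorm_dop_le [IsProbabilityMeasure μ] (hH : IsHaarSystem A μ θinv u)
    (hpos : ∀ ω : SigmaA l A, (μ (cylinder A [ω.1 0])).toReal ≠ 0) {a : SigmaA l A → ℂ}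
    (ha : ∀ h ∈ H0 A, eLpNorm (fun ω => Dop A μ θinv u (fun ω' => a ω' * h ω') ω -
      a ω * Dop A μ θinv u h ω) 2 μ ≤ eLpNorm h 2 μ) :
    eLpNorm (Dop A μ θinv u a) 2 μ ≤ 1 := by
  have hone : ∀ ω, indC A [] ω = 1 := fun ω => indC_of_mem (by simp [cylinder_nil])
  have hD := ha (indC A []) (Submodule.subset_span ⟨[], Or.inl rfl, rfl⟩)
  have hDone : ∀ ω, Dop A μ θinv u (indC A []) ω = 0 := fun ω => hH.dop_indC_nil (hpos ω)
  have heq : (fun ω => Dop A μ θinv u (fun ω' => a ω' * indC A [] ω') ω -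
      a ω * Dop A μ θinv u (indC A []) ω) = Dop A μ θinv u a := by
    have hmul : (fun ω' => a ω' * indC A [] ω') = a :=
      funext fun ω => by rw [hone ω, mul_one]
    funext ω
    rw [hmul, hDone ω, mul_zero, sub_zero]
  rw [heq] at hD
  refine hD.trans ?_
  have hconst : eLpNorm (fun _ : SigmaA l A => (1 : ℂ)) 2 μ ≤ 1 := by
    rw [eLpNorm_const _ (by simp) (IsProbabilityMeasure.ne_zero μ)]
    simp
  rwa [show indC A [] = fun _ => 1 from funext hone]

/-- Bound for the increments of `piProj`. -/
lemma IsHaarSystem.norm_sum_haarFun_le [IsProbabilityMeasure μ] (hH : IsHaarSystem A μ θinv u)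
    (hA : Primitive A) {x : List (Fin l)} (hx : Admissible A x) {δ : ℝ} (hδ : 0 < δ)
    (hxpos : 0 < (μ (cylinder A x)).toReal)
    (hchild : ∀ m < alpha A x, δ * (μ (cylinder A x)).toReal ≤
      (μ (cylinder A (child θinv x m))).toReal)
    {a : SigmaA l A → ℂ} {k : ℕ} (ha : DependsOnFirst k a)
    (hD : eLpNorm (Dop A μ θinv u a) 2 μ ≤ 1) (ω : SigmaA l A) :
    ‖∑ j ∈ Finset.range (alpha A x - 1), (∫ ω', a ω' * haarFun A μ θinv u x j ω' ∂μ) *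
      haarFun A μ θinv u x j ω‖ ≤ l ^ 3 / δ * Real.sqrt ((μ (cylinder A x)).toReal) := by
  set t := (μ (cylinder A x)).toReal with ht
  set s := Real.sqrt t with hs
  set d := Real.sqrt δ with hd
  have hs0 : 0 < s := Real.sqrt_pos.mpr hxpos
  have hd0 : 0 < d := Real.sqrt_pos.mpr hδ
  have hts : t = s ^ 2 := (Real.sq_sqrt hxpos.le).symm
  have hδd : δ = d ^ 2 := (Real.sq_sqrt hδ.le).symm
  have hsqrt : Real.sqrt (δ * t) = d * s := Real.sqrt_mul hδ.le t
  have hpos : ∀ m < alpha A x, 0 < (μ (cylinder A (child θinv x m))).toReal := fun m hm =>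
    (mul_pos hδ hxpos).trans_le (hchild m hm)
  have hhaar : ∀ j < alpha A x - 1, ∀ υ, ‖haarFun A μ θinv u x j υ‖ ≤ l * (d * s)⁻¹ := by
    intro j hj υ
    rw [← hsqrt]
    exact hH.norm_haarFun_le hA hx (mul_pos hδ hxpos) hchild (by omega) υ
  have hcoef : ∀ j < alpha A x - 1,
      ‖∫ ω', a ω' * haarFun A μ θinv u x j ω' ∂μ‖ ≤ l * d⁻¹ * s ^ 2 := by
    intro j hj
    have hL2 : eLpNorm (haarFun A μ θinv u x j) 2 μ ≤ ENNReal.ofReal (l * d⁻¹) := by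
      refine (eLpNorm_two_le_of_bound_on_cylinder (x := x) (by positivity) (hhaar j hj)
        fun υ hυ => haarFun_of_notMem hυ j).trans_eq ?_
      congr 1
      change l * (d * s)⁻¹ * s = _
      field_simp
    have hCS := enorm_integral_mul_le (μ := μ)
      (dependsOnFirst_haarFun (μ := μ) (θinv := θinv) (u := u) x j).measurable.aestronglyMeasurable
      (hH.dependsOnFirst_dop ha).measurable.aestronglyMeasurable
    rw [hH.integral_haarFun_mul_dop hx hpos hj ha] at hCS
    have hbound := hCS.trans (mul_le_mul' hL2 hD)
    rw [mul_one, ← ofReal_norm, ENNReal.ofReal_le_ofReal_iff (by positivity), norm_mul,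
      Complex.norm_real, ← ht] at hbound
    have halpha : (1 : ℝ) ≤ (alpha A x : ℝ) - 1 := by
      have : (2 : ℝ) ≤ alpha A x := by exact_mod_cast (by omega : 2 ≤ alpha A x)
      linarith
    have hev : (s ^ 2)⁻¹ ≤ ‖((alpha A x : ℝ) - 1) / t‖ := by
      rw [Real.norm_of_nonneg (div_nonneg (by linarith) hxpos.le), hts, inv_eq_one_div]
      gcongr
    simp only [mul_comm (a _)]
    have hle := (mul_le_mul_of_nonneg_right hev (norm_nonneg _)).trans hbound
    rwa [inv_mul_le_iff₀ (by positivity), mul_comm] at hle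
  calc _ ≤ ∑ _j ∈ Finset.range (alpha A x - 1), (l * d⁻¹ * s ^ 2) * (l * (d * s)⁻¹) := by
        refine norm_sum_le_of_le _ fun j hj => ?_
        have hj := Finset.mem_range.mp hj
        rw [norm_mul]
        exact mul_le_mul (hcoef j hj) (hhaar j hj ω) (norm_nonneg _) (by positivity)
    _ = (alpha A x - 1 : ℕ) * ((l * d⁻¹ * s ^ 2) * (l * (d * s)⁻¹)) := by simp
    _ ≤ l * ((l * d⁻¹ * s ^ 2) * (l * (d * s)⁻¹)) := by
        gcongr
        exact (Nat.sub_le _ _).trans (hA.alpha_le x)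
    _ = l ^ 3 / δ * s := by
        rw [hδd]
        field_simp

/-- Only the initial word of `ω` contributes to the increment of `piProj` at `ω`. -/
lemma piProj_succ_succ (a : SigmaA l A → ℂ) (n : ℕ) (ω : SigmaA l A) :
    piProj A μ θinv u (n + 1 + 1) a ω = piProj A μ θinv u (n + 1) a ω +
      ∑ j ∈ Finset.range (alpha A (wordPrefix ω (n + 1)) - 1),
        (∫ ω', a ω' * haarFun A μ θinv u (wordPrefix ω (n + 1)) j ω' ∂μ) *
          haarFun A μ θinv u (wordPrefix ω (n + 1)) j ω := by
  simp only [piProj]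
  rw [Finset.sum_range_succ, ← add_assoc]
  congr 1
  rw [Finset.sum_eq_single (fun i : Fin (n + 1) => ω.1 i)]
  · exact Set.indicator_of_mem
      (s := {w : Fin (n + 1) → Fin l | Admissible A (List.ofFn w)}) (admissible_wordPrefix ω n) _
  · intro w _ hw
    have hω : ω ∉ cylinder A (List.ofFn w) := by
      intro hmem
      refine hw (funext fun i => ?_)
      have := hmem i (by simpa using i.is_le)
      rw [List.getElem_ofFn] at this
      exact this.symm
    refine Set.indicator_apply_eq_zero.mpr fun _ => Finset.sum_eq_zero fun j _ => ?_
    rw [haarFun_of_notMem hω, mul_zero]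
  · simp

end Bounds

/-- There are `C' > 0` and `β < 0` such that for all `k, m ∈ ℕ` and every
`a ∈ H₀` with `‖[D, π(a)]‖ ≤ 1` on `H₀`, one has
`‖π_k(a) − π_{k+m}(a)‖_∞ ≤ C' ∑_{n=k}^{k+m−1} e^{nβ}`. -/
theorem piProj_cauchy_bound
    (hl : 2 ≤ l) (A : Matrix (Fin l) (Fin l) ℕ) (hA : Primitive A)
    (φ : SigmaA l A → ℝ) (hφ : HolderCont φ) (P : ℝ)
    (μ : Measure (SigmaA l A)) [IsProbabilityMeasure μ] (hGibbs : IsGibbs φ P μ)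
    (θinv : List (Fin l) → ℕ → Fin l)
    (hθ : ∀ (x : List (Fin l)) (hx : Admissible A x),
      Set.BijOn (θinv x) (Set.Iio (alpha A x)) {y : Fin l | A (x.getLast hx.1) y = 1})
    (u : List (Fin l) → ℕ → ℕ → ℝ)
    (hu_orth : ∀ x, Admissible A x → ∀ j < alpha A x, ∀ j' < alpha A x,
      ∑ m ∈ Finset.range (alpha A x), u x m j * u x m j' = if j = j' then 1 else 0)
    (hu_last : ∀ x, Admissible A x → ∀ m < alpha A x,
      u x m (alpha A x - 1) =
        (Real.sqrt ((μ (cylinder A x)).toReal))⁻¹ *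
          Real.sqrt ((μ (cylinder A (child θinv x m))).toReal)) :
    ∃ C' β : ℝ, 0 < C' ∧ β < 0 ∧ ∀ k m : ℕ, 1 ≤ k → 1 ≤ m → ∀ a ∈ H0 A,
      (∀ h ∈ H0 A,
      eLpNorm (fun ω => Dop A μ θinv u (fun ω' => a ω' * h ω') ω - a ω * Dop A μ θinv u h ω) 2 μ
        ≤ eLpNorm h 2 μ) →
      ∀ ω : SigmaA l A, ‖piProj A μ θinv u k a ω - piProj A μ θinv u (k + m) a ω‖ ≤
        C' * ∑ n ∈ Finset.Ico k (k + m), Real.exp (n * β) := by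
  have hH : IsHaarSystem A μ θinv u := ⟨hθ, hu_orth, hu_last⟩
  obtain ⟨δ, hδ, hδle⟩ := hGibbs.exists_le_succ hφ
  obtain ⟨C, β, hC, hβ, hdecay⟩ := exists_exponential_decay hl hA hδ hδle
  have hl0 : (0 : ℝ) < l := by exact_mod_cast (by omega : 0 < l)
  refine ⟨l ^ 3 / δ * Real.sqrt C, β / 2, by positivity, by linarith, ?_⟩
  intro k m hk _ a ha hcomm ω
  obtain ⟨M, hM⟩ := exists_dependsOnFirst_of_mem_H0 ha
  have hD : eLpNorm (Dop A μ θinv u a) 2 μ ≤ 1 :=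
    hH.eLpNorm_dop_le (fun ω => (hGibbs.toReal_pos ω one_pos).ne') hcomm
  have hincr : ∀ n : ℕ, 1 ≤ n →
      ‖piProj A μ θinv u n a ω - piProj A μ θinv u (n + 1) a ω‖ ≤
        l ^ 3 / δ * Real.sqrt C * Real.exp (n * (β / 2)) := by
    intro n hn
    obtain ⟨p, rfl⟩ := Nat.exists_eq_add_of_le' hn
    rw [piProj_succ_succ, sub_add_cancel_left, norm_neg]
    refine (hH.norm_sum_haarFun_le hA (admissible_wordPrefix ω p) hδ
      (hGibbs.toReal_pos ω p.succ_pos) (fun m hm => ?_) hM hD ω).trans ?_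
    · obtain ⟨ω', hpre, hchild⟩ := hH.exists_child_eq hA ω p hm
      rw [hchild, ← hpre]
      exact hδle ω' (p + 1) p.succ_pos
    · rw [mul_assoc]
      refine mul_le_mul_of_nonneg_left ?_ (by positivity)
      calc _ ≤ Real.sqrt (C * Real.exp ((p + 1 : ℕ) * β)) :=
            Real.sqrt_le_sqrt (hdecay ω (p + 1) p.succ_pos)
        _ = _ := by
            rw [Real.sqrt_mul hC.le, ← Real.exp_half, mul_div_assoc]
  clear * - hincr hk
  induction m with
  | zero => simp
  | succ m ih =>
    rw [← add_assoc, Finset.sum_Ico_succ_top (by omega), mul_add]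
    calc _ ≤ ‖piProj A μ θinv u k a ω - piProj A μ θinv u (k + m) a ω‖ +
          ‖piProj A μ θinv u (k + m) a ω - piProj A μ θinv u (k + m + 1) a ω‖ :=
          norm_sub_le_norm_sub_add_norm_sub _ _ _
      _ ≤ _ := add_le_add ih (hincr (k + m) (by omega))

end SFT
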